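/- arXiv:2605.03828 — 5 statements merged into one kernel-verified Lean document; each statement's English description precedes it below -/
import Mathlib

section
/- Let μ be an infinite cardinal and let f : [μ⁺]² → μ⁺ be a μ-bounded coloring. Then there exists a club subset C of μ⁺ such that the restriction of f to [C]² is normal, i.e., for all pairs a, b ∈ [C]², f(a) = f(b) implies max(a) = max(b). -/
/-!
Write `κ = μ⁺`. For `x < κ`, the pairs from `[x + 1]²` have at most `μ` colors, and each of them
is taken by at most `μ` pairs, so the pairs sharing a color with some pair from `[x + 1]²` number
at most `μ`. By regularity of `κ` their maxima are bounded below `κ`; this is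
`exists_bound_same_color`.

Let `C` consist of the `c < κ` such that every pair sharing its color with a pair below `c` has
its maximum below `c`. This is a set of closure points, hence closed, and iterating the bound
`ω` times and taking the supremum shows that it is unbounded. If `f a b = f a' b'` with `b < b'`
and `b' ∈ C`, then closure of `b'` applied to `{a, b}` gives `b' < b'`, a contradiction; so `f` is
normal on `C`.
-/

open Cardinal Ordinal Set

/-- The successor cardinal of `μ`, viewed as an ordinal. -/
noncomputable def succCardOrd (μ : Cardinal.{0}) : Ordinal.{0} := (Order.succ μ).ord

/-- Regularity of `μ⁺`, for sets of ordinals (which live one universe up). -/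
theorem sSup_lt_succCardOrd {μ : Cardinal.{0}} (hμ : ℵ₀ ≤ μ) {s : Set Ordinal.{0}}
    (hs : #s ≤ Cardinal.lift.{1} μ) (hlt : ∀ i ∈ s, i < succCardOrd μ) :
    sSup s < succCardOrd μ := by
  refine Ordinal.sSup_lt_of_lt_cof (hs.trans_lt ?_) hlt
  rw [← Ordinal.lift_cof, succCardOrd, (isRegular_succ hμ).cof_ord, Cardinal.lift_lt]
  exact Order.lt_succ μ

theorem succ_lt_succCardOrd {μ : Cardinal.{0}} (hμ : ℵ₀ ≤ μ) {x : Ordinal.{0}}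
    (hx : x < succCardOrd μ) : Order.succ x < succCardOrd μ :=
  (isSuccLimit_ord (hμ.trans (Order.le_succ μ))).succ_lt hx

theorem exists_bound_same_color {μ : Cardinal.{0}} (hμ : ℵ₀ ≤ μ)
    (f : Ordinal.{0} → Ordinal.{0} → Ordinal.{0})
    (hbdd : ∀ ξ : Ordinal.{0},
      Cardinal.mk {p : Ordinal.{0} × Ordinal.{0} //
        p.1 < p.2 ∧ p.2 < succCardOrd μ ∧ f p.1 p.2 = ξ} ≤ Cardinal.lift.{1} μ)
    (x : Ordinal.{0}) (hx : x < succCardOrd μ) :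
    ∃ y, y < succCardOrd μ ∧ x < y ∧ ∀ a b, a < b → b ≤ x →
      ∀ a' b', a' < b' → b' < succCardOrd μ → f a b = f a' b' → b' < y := by
  have hxs := succ_lt_succCardOrd hμ hx
  have hcard : Cardinal.lift.{1} (Order.succ x).card ≤ Cardinal.lift.{0} (Cardinal.lift.{1} μ) := by
    rw [Cardinal.lift_uzero, Cardinal.lift_le, ← Order.lt_succ_iff]
    exact lt_ord.1 hxs
  have hμ' : ℵ₀ ≤ Cardinal.lift.{1} μ := by simpa using hμ
  -- the maxima of the pairs sharing a color with some `(a, b)`, where `a, b ≤ x`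
  let T : Set Ordinal.{0} := ⋃ a < Order.succ x, ⋃ b < Order.succ x,
    Prod.snd '' {p : Ordinal.{0} × Ordinal.{0} | p.1 < p.2 ∧ p.2 < succCardOrd μ ∧
      f p.1 p.2 = f a b}
  have hT : #T ≤ Cardinal.lift.{1} μ :=
    mk_biUnion_le_of_le_lift hcard hμ' _ fun a _ =>
      mk_biUnion_le_of_le_lift hcard hμ' _ fun b _ => mk_image_le.trans (hbdd (f a b))
  have hTlt : ∀ i ∈ T, i < succCardOrd μ := by
    intro i hi
    simp only [T, mem_iUnion, mem_image] at hi
    obtain ⟨a, _, b, _, p, hp, rfl⟩ := hi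
    exact hp.2.1
  refine ⟨Order.succ (max x (sSup T)),
    succ_lt_succCardOrd hμ (max_lt hx (sSup_lt_succCardOrd hμ hT hTlt)),
    Order.lt_succ_of_le (le_max_left _ _), ?_⟩
  intro a b hab hb a' b' hab' hb' hf
  refine Order.lt_succ_of_le (le_max_of_le_right (le_csSup ⟨_, fun i hi => (hTlt i hi).le⟩ ?_))
  simp only [T, mem_iUnion, mem_image]
  exact ⟨a, Order.lt_succ_of_le (hab.le.trans hb), b, Order.lt_succ_of_le hb, (a', b'),
    ⟨hab', hb', hf.symm⟩, rfl⟩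

/-- Lemma 1 of Abraham–Cummings–Smyth: for every infinite cardinal `μ` and every
`μ`-bounded coloring `f : [μ⁺]² → μ⁺` (encoded on ordered pairs `a < b < μ⁺`),
there is a club `C ⊆ μ⁺` such that `f` restricted to pairs from `C` is normal. -/
theorem statement0 (μ : Cardinal.{0}) (hμ : ℵ₀ ≤ μ)
    (f : Ordinal.{0} → Ordinal.{0} → Ordinal.{0})
    (hrange : ∀ a b : Ordinal.{0}, a < b → b < succCardOrd μ → f a b < succCardOrd μ)
    (hbdd : ∀ ξ : Ordinal.{0},
      Cardinal.mk {p : Ordinal.{0} × Ordinal.{0} //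
        p.1 < p.2 ∧ p.2 < succCardOrd μ ∧ f p.1 p.2 = ξ} ≤ Cardinal.lift.{1} μ) :
    ∃ C : Set Ordinal.{0},
      -- `C` is a subset of `μ⁺`
      C ⊆ Set.Iio (succCardOrd μ) ∧
      -- `C` is unbounded in `μ⁺`
      (∀ a < succCardOrd μ, ∃ b ∈ C, a < b) ∧
      -- `C` is closed: the supremum of every nonempty subset of `C` that is
      -- less than `μ⁺` belongs to `C`
      (∀ S : Set Ordinal.{0}, S ⊆ C → S.Nonempty → sSup S < succCardOrd μ → sSup S ∈ C) ∧
      -- `f` restricted to `[C]²` is normal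
      (∀ a b a' b' : Ordinal.{0}, a ∈ C → b ∈ C → a' ∈ C → b' ∈ C →
        a < b → a' < b' → f a b = f a' b' → b = b') := by
  choose! g hg_lt hg_self hg using exists_bound_same_color hμ f hbdd
  refine ⟨{c | c < succCardOrd μ ∧ ∀ a b, a < b → b < c → ∀ a' b', a' < b' →
    b' < succCardOrd μ → f a b = f a' b' → b' < c}, fun c hc => hc.1, ?_, ?_, ?_⟩
  · intro a ha
    have hit : ∀ n : ℕ, g^[n] a < succCardOrd μ := by
      intro n
      induction n with
      | zero => exact ha
      | succ n ih => rw [Function.iterate_succ_apply']; exact hg_lt _ ih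
    have hle : ∀ n : ℕ, g^[n] a ≤ ⨆ n : ℕ, g^[n] a := fun n => Ordinal.le_iSup _ n
    refine ⟨⨆ n : ℕ, g^[n] a, ⟨?_, ?_⟩, (hg_self a ha).trans_le (hle 1)⟩
    · exact sSup_lt_succCardOrd hμ ((countable_range _).le_aleph0.trans (by simpa using hμ))
        (by rintro _ ⟨n, rfl⟩; exact hit n)
    · intro c d hcd hd c' d' hcd' hd' hf
      obtain ⟨n, hn⟩ := Ordinal.lt_iSup_iff.1 hd
      refine lt_of_lt_of_le ?_ (hle (n + 1))
      rw [Function.iterate_succ_apply']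
      exact hg _ (hit n) c d hcd hn.le c' d' hcd' hd' hf
  · intro S hS hne hlt
    have hB : BddAbove S := ⟨_, fun s hs => (hS hs).1.le⟩
    refine ⟨hlt, fun a b hab hb a' b' hab' hb' hf => ?_⟩
    obtain ⟨s, hs, hbs⟩ := exists_lt_of_lt_csSup hne hb
    exact ((hS hs).2 a b hab hbs a' b' hab' hb' hf).trans_le (le_csSup hB hs)
  · intro a b a' b' _ hb _ hb' hab hab' hf
    rcases lt_trichotomy b b' with h | h | h
    · exact absurd (hb'.2 a b hab h a' b' hab' hb'.1 hf) (lt_irrefl _)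
    · exact h
    · exact absurd (hb.2 a' b' hab' h a b hab hb.1 hf.symm) (lt_irrefl _)
end

section
/- Let f : [ω₂]² → ω₂ be a normal coloring, let X, Y ⊆ ω₂ and α ∈ ω₂ be such that every element of X is below α and α is below every element of Y. Suppose X ∪ {α} and X ∪ Y are both f-rainbow. If α ∉ F_f(X ∪ Y), then X ∪ {α} ∪ Y is f-rainbow. -/
/-!
By normality, two pairs of the same color share their maximum `b`. If `b ≤ α`, both pairs lie in
`X ∪ {α}`, which is rainbow. If `α < b`, then `b ∈ X ∪ Y`, and either both minima lie in the
rainbow set `X ∪ Y`, or both equal `α`, or exactly one of them is `α`; the last case would put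
`α` into `F_f(X ∪ Y)`.
-/

open Cardinal Ordinal Set

/-- The ordinal `ω₂`. -/
noncomputable def omega2 : Ordinal.{0} := (Cardinal.aleph 2).ord

/-- The value of a coloring (given on ordered pairs) at the unordered pair `{a, b}`. -/
noncomputable def pairApp (f : Ordinal.{0} → Ordinal.{0} → Ordinal.{0}) (a b : Ordinal.{0}) :
    Ordinal.{0} :=
  f (min a b) (max a b)

/-- `F_f(X) = {α ∈ ω₂ : ∃ β < γ both in X, α ≠ γ, f({α,γ}) = f({β,γ})}`. -/
noncomputable def Ff (f : Ordinal.{0} → Ordinal.{0} → Ordinal.{0}) (X : Set Ordinal.{0}) :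
    Set Ordinal.{0} :=
  {α | α < omega2 ∧ ∃ β γ, β ∈ X ∧ γ ∈ X ∧ β < γ ∧ α ≠ γ ∧ pairApp f α γ = f β γ}

/-- `A` is `f`-rainbow: `f` restricted to pairs from `A` is injective. -/
def Rainbow (f : Ordinal.{0} → Ordinal.{0} → Ordinal.{0}) (A : Set Ordinal.{0}) : Prop :=
  ∀ a b a' b' : Ordinal.{0}, a ∈ A → b ∈ A → a' ∈ A → b' ∈ A → a < b → a' < b' →
    f a b = f a' b' → a = a' ∧ b = b'

/-- Lemma 3 of Abraham–Cummings–Smyth: if `f` is a normal coloring on `[ω₂]²`,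
`X < α < Y`, both `X ∪ {α}` and `X ∪ Y` are `f`-rainbow, and `α ∉ F_f(X ∪ Y)`,
then `X ∪ {α} ∪ Y` is `f`-rainbow. -/
theorem statement2 (f : Ordinal.{0} → Ordinal.{0} → Ordinal.{0})
    (hnormal : ∀ a b a' b' : Ordinal.{0}, a < b → b < omega2 → a' < b' → b' < omega2 →
      f a b = f a' b' → b = b')
    (X Y : Set Ordinal.{0}) (α : Ordinal.{0})
    (hX : X ⊆ Set.Iio omega2) (hY : Y ⊆ Set.Iio omega2) (hα : α < omega2)
    (hXα : ∀ x ∈ X, x < α) (hαY : ∀ y ∈ Y, α < y)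
    (h1 : Rainbow f (X ∪ {α})) (h2 : Rainbow f (X ∪ Y))
    (h3 : α ∉ Ff f (X ∪ Y)) :
    Rainbow f (X ∪ {α} ∪ Y) := by
  have mem_Iio : ∀ z ∈ X ∪ {α} ∪ Y, z < omega2 := by
    rintro z ((hz | rfl) | hz)
    exacts [hX hz, hα, hY hz]
  have mem_low : ∀ z ∈ X ∪ {α} ∪ Y, z ≤ α → z ∈ X ∪ {α} := by
    rintro z (hz | hz) hle
    · exact hz
    · exact absurd (hαY z hz) hle.not_gt
  have eq_or_mem : ∀ z ∈ X ∪ {α} ∪ Y, z = α ∨ z ∈ X ∪ Y := by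
    rintro z ((hz | hz) | hz)
    exacts [Or.inr (Or.inl hz), Or.inl hz, Or.inr (Or.inr hz)]
  have color_ne : ∀ a b, a ∈ X ∪ Y → b ∈ X ∪ Y → a < b → α < b → f α b ≠ f a b := by
    intro a b ha hb hab hαb h
    refine h3 ⟨hα, a, b, ha, hb, hab, hαb.ne, ?_⟩
    rwa [pairApp, min_eq_left hαb.le, max_eq_right hαb.le]
  intro a b a' b' ha hb ha' hb' hab hab' h
  obtain rfl : b = b' := hnormal a b a' b' hab (mem_Iio b hb) hab' (mem_Iio b' hb') h
  rcases le_or_gt b α with hbα | hαb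
  · exact h1 a b a' b (mem_low a ha (hab.le.trans hbα)) (mem_low b hb hbα)
      (mem_low a' ha' (hab'.le.trans hbα)) (mem_low b hb hbα) hab hab' h
  · have hbXY : b ∈ X ∪ Y := (eq_or_mem b hb).resolve_left hαb.ne'
    rcases eq_or_mem a ha with rfl | haXY <;> rcases eq_or_mem a' ha' with rfl | haXY'
    · exact ⟨rfl, rfl⟩
    · exact absurd h (color_ne a' b haXY' hbXY hab' hαb)
    · exact absurd h.symm (color_ne a b haXY hbXY hab hαb)
    · exact h2 a b a' b haXY hbXY haXY' hbXY hab hab' h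
end

section
/- Suppose for each δ with ω₁ ≤ δ < ω₂ we are given a family 𝒜_δ = {A^δ_γ : γ < ω₁} such that each A^δ_γ is a block consisting of pairs of ordinals less than δ, and such that for γ ≠ γ' the sets ⋃A^δ_γ and ⋃A^δ_{γ'} are disjoint. Then there exists a 2-bounded normal coloring c : [ω₂]² → ω₂ such that for every δ with ω₁ ≤ δ < ω₂ and every δ' with ω₁ ≤ δ' ≤ δ, there is γ < ω₁ such that c({α, δ}) = c({β, δ}) for every pair {α, β} ∈ A^{δ'}_γ. -/
/-!
Fix `δ` with `ω₁ ≤ δ < ω₂`. There are at most `ℵ₁` ordinals `δ' ∈ [ω₁, δ]`, so they can be listed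
in a sequence of length at most `ω₁`, and one chooses recursively `γ(δ') < ω₁` such that
`⋃ A^{δ'}_{γ(δ')}` is disjoint from all the unions chosen before (`exists_disjoint_choice`). This is
possible because the points used before form a countable set, while the `ω₁` many candidates have
pairwise disjoint unions, so that only countably many of them meet it (`exists_avoiding`).

The pairs of all the chosen blocks are then pairwise disjoint. Let `pairRep` send the larger point
of each such pair to the smaller one and fix all other ordinals. This map identifies the two points
of each chosen pair and is at most two-to-one (`exists_rep`). Coding `(pairRep a, δ)` by an ordinal
below `ω₂`, injectively, gives the color of `{a, δ}`; remembering `δ` in the code makes the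
coloring normal.
-/

open Cardinal Ordinal Set

/-- The ordinal `ω₁`. -/
noncomputable def omega1 : Ordinal.{0} := (Cardinal.aleph 1).ord

/-- A block consisting of pairs of ordinals less than `δ`: a countable set of
pairwise disjoint 2-element sets (encoded as ordered pairs `p.1 < p.2`). -/
def IsBlock (δ : Ordinal.{0}) (B : Set (Ordinal.{0} × Ordinal.{0})) : Prop :=
  B.Countable ∧
  (∀ p ∈ B, p.1 < p.2 ∧ p.2 < δ) ∧
  (∀ p ∈ B, ∀ q ∈ B, p ≠ q →
    ({p.1, p.2} ∩ {q.1, q.2} : Set Ordinal.{0}) = ∅)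

/-- The set of ordinals appearing in a block. -/
def blockUnion (B : Set (Ordinal.{0} × Ordinal.{0})) : Set Ordinal.{0} :=
  ⋃ p ∈ B, {p.1, p.2}

theorem lift_card_omega1 : mk (Iio omega1) = Cardinal.lift.{1} (aleph 1 : Cardinal.{0}) := by
  rw [Cardinal.mk_Iio_ordinal, omega1, card_ord]

/-- Among `ω₁` many pairwise disjoint sets, one avoids a given countable set. -/
theorem exists_avoiding (U : Ordinal.{0} → Set Ordinal.{0})
    (hU : ∀ γ < omega1, ∀ γ' < omega1, γ ≠ γ' → U γ ∩ U γ' = ∅)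
    (C : Set Ordinal.{0}) (hC : C.Countable) :
    ∃ γ < omega1, U γ ∩ C = ∅ := by
  by_contra! h
  choose x hx using fun γ : Iio omega1 => h γ.1 γ.2
  have hinj : Function.Injective (fun γ => (⟨x γ, (hx γ).2⟩ : C)) := by
    intro γ γ' hxx
    by_contra hne
    have hxx : x γ = x γ' := congrArg Subtype.val hxx
    have hmem : x γ ∈ U γ ∩ U γ' := ⟨(hx γ).1, hxx ▸ (hx γ').1⟩
    rw [hU γ γ.2 γ' γ'.2 (fun e => hne (Subtype.ext e))] at hmem
    exact hmem
  have : Countable C := hC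
  have hcount : Countable (Iio omega1) := hinj.countable
  have hle := Cardinal.mk_le_aleph0_iff.2 hcount
  rw [lift_card_omega1, lift_le_aleph0] at hle
  exact absurd hle (not_le.2 aleph0_lt_aleph_one)

/-- Every initial segment `[0, δ]` with `δ < ω₂` injects into `ω₁`. -/
theorem exists_injOn_omega1 (δ : Ordinal.{0}) (hδ : δ < omega2) :
    ∃ f : Iic δ → Ordinal.{0}, Function.Injective f ∧ ∀ i, f i < omega1 := by
  have hcard : mk (Iic δ) ≤ mk (Iio omega1) := by
    have h2 : (Order.succ δ) < (aleph 2).ord :=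
      (isSuccLimit_ord (aleph0_le_aleph 2)).succ_lt hδ
    have h3 : (Order.succ δ).card < aleph 2 := lt_ord.1 h2
    have h4 : (aleph 2 : Cardinal.{0}) = Order.succ (aleph 1) := by
      rw [succ_aleph, one_add_one_eq_two]
    rw [h4, Order.lt_succ_iff] at h3
    rw [← Order.Iio_succ, Cardinal.mk_Iio_ordinal, lift_card_omega1]
    exact Cardinal.lift_le.2 h3
  obtain ⟨e⟩ := hcard
  exact ⟨fun i => (e i).1, fun i j h => e.injective (Subtype.ext h), fun i => (e i).2⟩

/-- Transfinite choice: given an index type that injects into `ω₁` and, for each index, `ω₁` many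
countable pairwise disjoint sets, one member can be picked from each family so that the picked
sets are pairwise disjoint. -/
theorem exists_disjoint_choice {ι : Type 1} (f : ι → Ordinal.{0}) (hf : Function.Injective f)
    (hf1 : ∀ i, f i < omega1) (U : ι → Ordinal.{0} → Set Ordinal.{0})
    (hc : ∀ i, ∀ γ < omega1, (U i γ).Countable)
    (hU : ∀ i, ∀ γ < omega1, ∀ γ' < omega1, γ ≠ γ' → U i γ ∩ U i γ' = ∅) :
    ∃ g : ι → Ordinal.{0}, (∀ i, g i < omega1) ∧ ∀ i j, i ≠ j → U i (g i) ∩ U j (g j) = ∅ := by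
  have hwf : WellFounded (fun i j : ι => f i < f j) := InvImage.wf f Ordinal.lt_wf
  let g : ι → Ordinal.{0} := hwf.fix fun j h =>
    Classical.epsilon fun γ => γ < omega1 ∧ U j γ ∩ (⋃ i : {i // f i < f j}, U i.1 (h i.1 i.2)) = ∅
  have hg (j : ι) : g j = Classical.epsilon fun γ =>
      γ < omega1 ∧ U j γ ∩ (⋃ i : {i // f i < f j}, U i.1 (g i.1)) = ∅ := hwf.fix_eq _ j
  have key (j : ι) : g j < omega1 ∧ U j (g j) ∩ (⋃ i : {i // f i < f j}, U i.1 (g i.1)) = ∅ := by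
    induction j using hwf.induction with
    | _ j ih =>
      -- Proper initial segments of `ω₁` are countable, so only countably many indices precede `j`.
      have hctb : Countable {i // f i < f j} := by
        have hI : Countable (Iio (f j)) := by
          rw [← Cardinal.mk_le_aleph0_iff, Cardinal.mk_Iio_ordinal, lift_le_aleph0,
            ← Order.lt_succ_iff, succ_aleph0]
          exact lt_ord.1 (hf1 j)
        exact Function.Injective.countable (f := fun i : {i // f i < f j} =>
          (⟨f i.1, i.2⟩ : Iio (f j)))
          (fun a b hab => Subtype.ext (hf (congrArg Subtype.val hab)))
      have hex := exists_avoiding (U j) (hU j) (⋃ i : {i // f i < f j}, U i.1 (g i.1))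
        (countable_iUnion fun i => hc i.1 _ (ih i.1 i.2).1)
      rw [hg j]
      exact Classical.epsilon_spec hex
  have hlt (i j : ι) (hij : f i < f j) (x : Ordinal.{0}) (hi : x ∈ U i (g i))
      (hj : x ∈ U j (g j)) : False := by
    have hmem : x ∈ U j (g j) ∩ (⋃ i : {i // f i < f j}, U i.1 (g i.1)) :=
      ⟨hj, mem_iUnion.2 ⟨⟨i, hij⟩, hi⟩⟩
    rw [(key j).2] at hmem
    exact hmem
  refine ⟨g, fun i => (key i).1, fun i j hij => ?_⟩
  rw [eq_empty_iff_forall_notMem]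
  rintro x ⟨hi, hj⟩
  rcases lt_or_gt_of_ne (fun e => hij (hf e)) with h | h
  · exact hlt i j h x hi hj
  · exact hlt j i h x hj hi

open Classical in
/-- Representative of `a` modulo the pairs in `P`: the larger point of a pair in `P` is sent to
the smaller one, and every other ordinal to itself. -/
noncomputable def pairRep (P : Set (Ordinal.{0} × Ordinal.{0})) (a : Ordinal.{0}) : Ordinal.{0} :=
  if h : ∃ p ∈ P, p.2 = a then h.choose.1 else a

/-- For a set `P` of pairwise disjoint pairs, `pairRep P` never raises an ordinal, identifies the two points
of each pair in `P`, and is at most two-to-one. -/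
theorem pairRep_spec (P : Set (Ordinal.{0} × Ordinal.{0})) (hlt : ∀ p ∈ P, p.1 < p.2)
    (hP : ∀ p ∈ P, ∀ q ∈ P, ∀ x ∈ ({p.1, p.2} : Set Ordinal.{0}),
      x ∈ ({q.1, q.2} : Set Ordinal.{0}) → p = q) :
    (∀ a, pairRep P a ≤ a) ∧ (∀ p ∈ P, pairRep P p.1 = pairRep P p.2) ∧
      ∀ r, ∃ s, ∀ a, pairRep P a = r → a = r ∨ a = s := by
  have h2 (p) (hp : p ∈ P) : pairRep P p.2 = p.1 := by
    have h : ∃ q ∈ P, q.2 = p.2 := ⟨p, hp, rfl⟩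
    have hq := h.choose_spec
    have : h.choose = p := hP _ hq.1 p hp p.2 (by simp [hq.2]) (by simp)
    rw [pairRep, dif_pos h, this]
  have h0 (a) (h : ¬ ∃ p ∈ P, p.2 = a) : pairRep P a = a := by
    rw [pairRep, dif_neg h]
  have h1 (p) (hp : p ∈ P) : pairRep P p.1 = p.1 := by
    apply h0
    rintro ⟨q, hq, hqp⟩
    have : q = p := hP q hq p hp p.1 (by simp [hqp]) (by simp)
    subst this
    exact (hlt q hq).ne' hqp
  refine ⟨fun a => ?_, fun p hp => (h1 p hp).trans (h2 p hp).symm, fun r => ?_⟩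
  · by_cases h : ∃ p ∈ P, p.2 = a
    · obtain ⟨p, hp, rfl⟩ := h
      rw [h2 p hp]
      exact (hlt p hp).le
    · exact (h0 a h).le
  · by_cases hr : ∃ p ∈ P, p.1 = r
    · obtain ⟨p, hp, rfl⟩ := hr
      refine ⟨p.2, fun a ha => ?_⟩
      by_cases h : ∃ q ∈ P, q.2 = a
      · obtain ⟨q, hq, rfl⟩ := h
        rw [h2 q hq] at ha
        have : q = p := hP q hq p hp p.1 (by simp [ha]) (by simp)
        exact Or.inr (by rw [this])
      · exact Or.inl ((h0 a h).symm.trans ha)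
    · refine ⟨r, fun a ha => ?_⟩
      by_cases h : ∃ q ∈ P, q.2 = a
      · obtain ⟨q, hq, rfl⟩ := h
        exact absurd ⟨q, hq, (h2 q hq).symm.trans ha⟩ hr
      · exact Or.inl ((h0 a h).symm.trans ha)

/-- The coloring of the pairs with a fixed maximum `δ`, before coding: an at most
two-to-one map that never raises an ordinal and identifies all pairs of some block of each family `𝒜_{δ'}`, `ω₁ ≤ δ' ≤ δ`. -/
theorem exists_rep (A : Ordinal.{0} → Ordinal.{0} → Set (Ordinal.{0} × Ordinal.{0}))
    (hblock : ∀ δ : Ordinal.{0}, omega1 ≤ δ → δ < omega2 →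
      ∀ γ < omega1, IsBlock δ (A δ γ))
    (hdisj : ∀ δ : Ordinal.{0}, omega1 ≤ δ → δ < omega2 →
      ∀ γ < omega1, ∀ γ' < omega1, γ ≠ γ' →
        blockUnion (A δ γ) ∩ blockUnion (A δ γ') = ∅)
    (δ : Ordinal.{0}) (hδ : δ < omega2) :
    ∃ ρ : Ordinal.{0} → Ordinal.{0}, (∀ a, ρ a ≤ a) ∧
      (∀ r, ∃ s, ∀ a, ρ a = r → a = r ∨ a = s) ∧
      ∀ δ', omega1 ≤ δ' → δ' ≤ δ → ∃ γ < omega1, ∀ p ∈ A δ' γ, ρ p.1 = ρ p.2 := by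
  obtain ⟨f, hf, hf1⟩ := exists_injOn_omega1 δ hδ
  let ι := {i : Iic δ // omega1 ≤ i.1}
  have hi2 (i : ι) : i.1.1 < omega2 := lt_of_le_of_lt i.1.2 hδ
  obtain ⟨g, hg, hgd⟩ := exists_disjoint_choice (ι := ι) (fun i => f i.1)
    (fun i j h => Subtype.ext (hf h)) (fun i => hf1 i.1) (fun i γ => blockUnion (A i.1.1 γ))
    (fun i γ hγ => (hblock i.1.1 i.2 (hi2 i) γ hγ).1.biUnion
      fun p _ => (Set.toFinite {p.1, p.2}).countable)
    (fun i => hdisj i.1.1 i.2 (hi2 i))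
  let P : Set (Ordinal.{0} × Ordinal.{0}) := ⋃ i : ι, A i.1.1 (g i)
  have hB (i : ι) := hblock i.1.1 i.2 (hi2 i) (g i) (hg i)
  obtain ⟨hle, hpair, htwo⟩ := pairRep_spec P
    (fun p hp => by
      obtain ⟨i, hi⟩ := mem_iUnion.1 hp
      exact ((hB i).2.1 p hi).1)
    (fun p hp q hq x hxp hxq => by
      obtain ⟨i, hi⟩ := mem_iUnion.1 hp
      obtain ⟨j, hj⟩ := mem_iUnion.1 hq
      by_cases hij : i = j
      · subst hij
        by_contra hne
        have hmem : x ∈ ({p.1, p.2} ∩ {q.1, q.2} : Set Ordinal.{0}) := ⟨hxp, hxq⟩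
        rw [(hB i).2.2 p hi q hj hne] at hmem
        exact hmem
      · have hmem : x ∈ blockUnion (A i.1.1 (g i)) ∩ blockUnion (A j.1.1 (g j)) :=
          ⟨mem_biUnion hi hxp, mem_biUnion hj hxq⟩
        rw [hgd i j hij] at hmem
        exact hmem.elim)
  refine ⟨pairRep P, hle, htwo, fun δ' h1 h2 => ?_⟩
  exact ⟨g ⟨⟨δ', h2⟩, h1⟩, hg _, fun p hp => hpair p (mem_iUnion.2 ⟨⟨⟨δ', h2⟩, h1⟩, hp⟩)⟩

/-- An injective coding of pairs of ordinals below `ω₂` by ordinals below `ω₂`. -/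
theorem exists_pairing : ∃ e : Ordinal.{0} → Ordinal.{0} → Ordinal.{0},
    (∀ a b, e a b < omega2) ∧ ∀ a b a' b', a < omega2 → b < omega2 → a' < omega2 → b' < omega2 →
      e a b = e a' b' → a = a' ∧ b = b' := by
  classical
  have hcard : mk (Iio omega2 × Iio omega2) ≤ mk (Iio omega2) := by
    rw [← mul_def, Cardinal.mk_Iio_ordinal, omega2, card_ord]
    exact (mul_eq_self (aleph0_le_lift.2 (aleph0_le_aleph 2))).le
  obtain ⟨e⟩ := hcard
  have h0 : (0 : Ordinal.{0}) < omega2 :=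
    lt_ord.2 (by rw [card_zero]; exact aleph_pos 2)
  refine ⟨fun a b => if h : a < omega2 ∧ b < omega2 then (e (⟨a, h.1⟩, ⟨b, h.2⟩)).1 else 0,
    fun a b => ?_, fun a b a' b' ha hb ha' hb' h => ?_⟩
  · dsimp only
    split_ifs with h
    · exact (e _).2
    · exact h0
  · dsimp only at h
    rw [dif_pos ⟨ha, hb⟩, dif_pos ⟨ha', hb'⟩] at h
    have := e.injective (Subtype.ext h)
    exact ⟨congrArg (fun z => z.1.1) this, congrArg (fun z => z.2.1) this⟩

/-- Construction from Theorem 2.1: given families `𝒜_δ = {A^δ_γ : γ < ω₁}` of blocks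
below `δ` with pairwise disjoint unions, there is a 2-bounded normal coloring
`c : [ω₂]² → ω₂` such that for all `ω₁ ≤ δ' ≤ δ < ω₂` some block `A^{δ'}_γ` is
monochromatic when paired with `δ`. -/
theorem statement6 (A : Ordinal.{0} → Ordinal.{0} → Set (Ordinal.{0} × Ordinal.{0}))
    (hblock : ∀ δ : Ordinal.{0}, omega1 ≤ δ → δ < omega2 →
      ∀ γ < omega1, IsBlock δ (A δ γ))
    (hdisj : ∀ δ : Ordinal.{0}, omega1 ≤ δ → δ < omega2 →
      ∀ γ < omega1, ∀ γ' < omega1, γ ≠ γ' →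
        blockUnion (A δ γ) ∩ blockUnion (A δ γ') = ∅) :
    ∃ c : Ordinal.{0} → Ordinal.{0} → Ordinal.{0},
      -- `c` maps `[ω₂]²` into `ω₂`
      (∀ a b : Ordinal.{0}, a < b → b < omega2 → c a b < omega2) ∧
      -- `c` is 2-bounded
      (∀ ξ : Ordinal.{0},
        Cardinal.mk {p : Ordinal.{0} × Ordinal.{0} //
          p.1 < p.2 ∧ p.2 < omega2 ∧ c p.1 p.2 = ξ} ≤ 2) ∧
      -- `c` is normal
      (∀ a b a' b' : Ordinal.{0}, a < b → b < omega2 → a' < b' → b' < omega2 →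
        c a b = c a' b' → b = b') ∧
      -- for every `ω₁ ≤ δ' ≤ δ < ω₂` there is `γ < ω₁` such that all pairs of
      -- `A^{δ'}_γ` get the same color when joined with `δ`
      (∀ δ : Ordinal.{0}, omega1 ≤ δ → δ < omega2 →
        ∀ δ' : Ordinal.{0}, omega1 ≤ δ' → δ' ≤ δ →
          ∃ γ < omega1, ∀ p ∈ A δ' γ, c p.1 δ = c p.2 δ) := by
  choose! ρ hle htwo hmono using exists_rep A hblock hdisj
  obtain ⟨e, he, hinj⟩ := exists_pairing
  have hlt {a b : Ordinal.{0}} (hab : a < b) (hb : b < omega2) : ρ b a < omega2 :=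
    (hle b hb a).trans_lt (hab.trans hb)
  refine ⟨fun a b => e (ρ b a) b, fun a b _ _ => he _ _, fun ξ => ?_,
    fun a b a' b' hab hb hab' hb' h =>
      (hinj _ _ _ _ (hlt hab hb) hb (hlt hab' hb') hb' h).2,
    fun δ _ h2 δ' h1' h2' => ?_⟩
  · by_cases hne : ∃ p : Ordinal.{0} × Ordinal.{0},
        p.1 < p.2 ∧ p.2 < omega2 ∧ e (ρ p.2 p.1) p.2 = ξ
    · obtain ⟨⟨a, b⟩, hab, hb, rfl⟩ := hne
      obtain ⟨s, hs⟩ := htwo b hb (ρ b a)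
      have hsub : {p : Ordinal.{0} × Ordinal.{0} | p.1 < p.2 ∧ p.2 < omega2 ∧
          e (ρ p.2 p.1) p.2 = e (ρ b a) b} ⊆ {(ρ b a, b), (s, b)} := by
        rintro ⟨a', b'⟩ ⟨hab', hb', h⟩
        obtain ⟨hr, hbb⟩ := hinj _ _ _ _ (hlt hab' hb') hb' (hlt hab hb) hb h
        dsimp only at hr hbb
        subst hbb
        rcases hs a' hr with h | h
        · left; rw [h]
        · right; rw [h]; rfl
      refine (Cardinal.mk_le_mk_of_subset hsub).trans ?_
      refine (Cardinal.mk_insert_le).trans ?_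
      rw [Cardinal.mk_singleton, one_add_one_eq_two]
    · have : IsEmpty {p : Ordinal.{0} × Ordinal.{0} //
          p.1 < p.2 ∧ p.2 < omega2 ∧ e (ρ p.2 p.1) p.2 = ξ} := ⟨fun p => hne ⟨p.1, p.2⟩⟩
      rw [Cardinal.mk_eq_zero]
      exact zero_le
  · obtain ⟨γ, hγ, h⟩ := hmono δ h2 δ' h1' h2'
    exact ⟨γ, hγ, fun p hp => congrArg (fun r => e r δ) (h p hp)⟩
end

section
/- Let I be a <ω₂-complete proper ideal on ω₂ and suppose there is a family ℬ ⊆ I⁺ which is dense in (I⁺, ⊆) (for every A ∈ I⁺ there is B ∈ ℬ with B ⊆ A) and <ω₁-closed (for every countable ⊆-decreasing sequence of members of ℬ there is a member of ℬ contained in all of them). Then for every countable ordinal α, player II has a winning strategy in the game 𝔊^α_{ω₁}(I). -/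
/-! Player II secretly builds a `⊆`-decreasing sequence of sets `B_β ∈ ℬ` alongside the ordinals
`ξ_β`. In round `β`, closure of `ℬ` gives a lower bound `B ∈ ℬ` of the countably many earlier sets
(`exists_lower_bound`). Since `B` is the union over `ξ < ω₁` of the sets `{η ∈ B | F β η ≤ ξ}`,
`<ω₂`-completeness makes one of these positive, and density gives `B_β ∈ ℬ` inside it
(`exists_bounded_subset`). After all `α` rounds, a lower bound of the whole sequence is a positive
set on which every `F β` is bounded by `ξ_β`. The choices are made by `Classical.epsilon` along
well-founded recursion, so that they visibly depend on the past only. -/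

open Cardinal Ordinal Set

/-- Player II has a winning strategy in the game `𝔊^α_{ω₁}(I)`: in round `β < α`
player I plays a function `F β : ω₂ → ω₁` and player II (following a strategy `σ`
which depends only on the moves played so far) responds with an ordinal
`σ F β < ω₁`; II wins if `{η < ω₂ : ∀ β < α, F β η ≤ σ F β}` is `I`-positive. -/
def IIWinsOmega1Game (I : Set (Set Ordinal.{0})) (α : Ordinal.{0}) : Prop :=
  ∃ σ : (Ordinal.{0} → Ordinal.{0} → Ordinal.{0}) → Ordinal.{0} → Ordinal.{0},
    -- the strategy depends only on the history of I's moves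
    (∀ F F' : Ordinal.{0} → Ordinal.{0} → Ordinal.{0}, ∀ β < α,
      (∀ γ ≤ β, F γ = F' γ) → σ F β = σ F' β) ∧
    -- against any legal play of I, II's moves are legal and II wins
    (∀ F : Ordinal.{0} → Ordinal.{0} → Ordinal.{0},
      (∀ β < α, ∀ η < omega2, F β η < omega1) →
      (∀ β < α, σ F β < omega1) ∧
      {η | η < omega2 ∧ ∀ β < α, F β η ≤ σ F β} ∉ I)

/-- `p = (B, ξ)` is a good response of II to the function `f`, where `prev γ` for `γ < β` are the
responses in the earlier rounds: `B ∈ ℬ` is contained in all earlier sets, and `f` is bounded on `B`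
by `ξ < ω₁`. -/
def GoodResponse (ℬ : Set (Set Ordinal.{0})) (β : Ordinal.{0}) (f : Ordinal.{0} → Ordinal.{0})
    (prev : ∀ γ, γ < β → Set Ordinal.{0} × Ordinal.{0}) (p : Set Ordinal.{0} × Ordinal.{0}) :
    Prop :=
  p.1 ∈ ℬ ∧ (∀ γ (h : γ < β), p.1 ⊆ (prev γ h).1) ∧ p.2 < omega1 ∧ ∀ η ∈ p.1, f η ≤ p.2

/-- The response of II in round `β` against the play `F`: the pair of the auxiliary set `B_β` and
the ordinal `ξ_β` actually played (a junk value if no good response exists). -/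
noncomputable def response (ℬ : Set (Set Ordinal.{0})) (F : Ordinal.{0} → Ordinal.{0} → Ordinal.{0})
    (β : Ordinal.{0}) : Set Ordinal.{0} × Ordinal.{0} :=
  Classical.epsilon (GoodResponse ℬ β (F β) fun γ _ => response ℬ F γ)
termination_by β

theorem response_congr (ℬ : Set (Set Ordinal.{0}))
    (F F' : Ordinal.{0} → Ordinal.{0} → Ordinal.{0}) (β : Ordinal.{0})
    (h : ∀ γ ≤ β, F γ = F' γ) : response ℬ F β = response ℬ F' β := by
  induction β using WellFoundedLT.induction with
  | ind β ih =>
    have hprev : (fun γ (_ : γ < β) => response ℬ F γ) = fun γ _ => response ℬ F' γ := by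
      funext γ hγ
      exact ih γ hγ fun δ hδ => h δ (hδ.trans hγ.le)
    rw [response, response, h β le_rfl, hprev]

/-- A decreasing sequence in `ℬ` of arbitrary countable length `δ` (possibly `0`) has a lower bound
in `ℬ`. -/
theorem exists_lower_bound (I ℬ : Set (Set Ordinal.{0}))
    (hproper : Set.Iio omega2 ∉ I)
    (hdense : ∀ X : Set Ordinal.{0}, X ⊆ Set.Iio omega2 → X ∉ I → ∃ B ∈ ℬ, B ⊆ X)
    (hclosed : ∀ g : ℕ → Set Ordinal.{0}, (∀ n, g n ∈ ℬ) →
      (∀ n m : ℕ, n ≤ m → g m ⊆ g n) → ∃ B ∈ ℬ, ∀ n, B ⊆ g n)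
    (δ : Ordinal.{0}) (hδ : δ < omega1) (S : Ordinal.{0} → Set Ordinal.{0})
    (hS : ∀ γ < δ, S γ ∈ ℬ) (hanti : ∀ γ < δ, ∀ γ' < γ, S γ ⊆ S γ') :
    ∃ B ∈ ℬ, ∀ γ < δ, B ⊆ S γ := by
  rcases eq_or_ne δ 0 with rfl | h0
  · obtain ⟨B, hB, -⟩ := hdense _ subset_rfl hproper
    exact ⟨B, hB, fun γ hγ => absurd hγ (not_lt_bot (a := γ))⟩
  have hcard : δ.card ≤ ℵ₀ := by
    have : δ.card < Cardinal.aleph 1 := Cardinal.lt_ord.1 hδ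
    rwa [← Order.lt_succ_iff, Cardinal.succ_aleph0]
  have : Countable (Set.Iio δ) := by
    rw [← Cardinal.mk_le_aleph0_iff, Cardinal.mk_Iio_ordinal]
    exact Cardinal.lift_le_aleph0.2 hcard
  have : Nonempty (Set.Iio δ) := ⟨⟨0, pos_iff_ne_zero.2 h0⟩⟩
  obtain ⟨e, he⟩ := exists_surjective_nat (Set.Iio δ)
  -- The running maxima of an enumeration of `δ` form a monotone cofinal sequence in `δ`.
  obtain ⟨B, hB, hBs⟩ := hclosed (fun n => S (partialSups e n)) (fun n => hS _ (partialSups e n).2)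
    (by
      intro n m hnm
      have hle : partialSups e n ≤ partialSups e m := (partialSups e).monotone hnm
      rcases hle.eq_or_lt with h | h
      · simp only [h, subset_rfl]
      · exact hanti _ (partialSups e m).2 _ h)
  refine ⟨B, hB, fun γ hγ => ?_⟩
  obtain ⟨n, hn⟩ := he ⟨γ, hγ⟩
  have hle : e n ≤ partialSups e n := le_partialSups e n
  rw [hn] at hle
  refine (hBs n).trans ?_
  rcases hle.eq_or_lt with h | h
  · rw [← h]
  · exact hanti _ (partialSups e n).2 _ h

/-- Every function `ω₂ → ω₁` is bounded on some member of `ℬ` below a given one. -/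
theorem exists_bounded_subset (I ℬ : Set (Set Ordinal.{0}))
    (hcomplete : ∀ C : Set (Set Ordinal.{0}), C ⊆ I →
      Cardinal.mk ↥C < Cardinal.lift.{1,0} (Cardinal.aleph 2) → ⋃₀ C ∈ I)
    (hBpos : ∀ B ∈ ℬ, B ⊆ Set.Iio omega2 ∧ B ∉ I)
    (hdense : ∀ X : Set Ordinal.{0}, X ⊆ Set.Iio omega2 → X ∉ I → ∃ B ∈ ℬ, B ⊆ X)
    (B : Set Ordinal.{0}) (hB : B ∈ ℬ) (f : Ordinal.{0} → Ordinal.{0})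
    (hf : ∀ η < omega2, f η < omega1) :
    ∃ B' ∈ ℬ, B' ⊆ B ∧ ∃ ξ < omega1, ∀ η ∈ B', f η ≤ ξ := by
  obtain ⟨hBsub, hBI⟩ := hBpos B hB
  obtain ⟨ξ, hξ, hpos⟩ : ∃ ξ < omega1, {η | η ∈ B ∧ f η ≤ ξ} ∉ I := by
    by_contra! hcon
    refine hBI ?_
    have hU : ⋃₀ ((fun ξ => {η | η ∈ B ∧ f η ≤ ξ}) '' Set.Iio omega1) = B := by
      ext η
      simp only [Set.sUnion_image, Set.mem_iUnion, Set.mem_ofPred_eq, Set.mem_Iio]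
      exact ⟨fun ⟨_, _, h, _⟩ => h, fun h => ⟨f η, hf η (hBsub h), h, le_rfl⟩⟩
    rw [← hU]
    refine hcomplete _ ?_ ?_
    · rintro _ ⟨ξ, hξ, rfl⟩
      exact hcon ξ hξ
    · refine Cardinal.mk_image_le.trans_lt ?_
      rw [Cardinal.mk_Iio_ordinal, Cardinal.lift_lt, omega1, Cardinal.card_ord]
      exact Cardinal.aleph_lt_aleph.2 (by norm_num)
  obtain ⟨B', hB', hsub⟩ := hdense _ (fun η h => hBsub h.1) hpos
  exact ⟨B', hB', fun η h => (hsub h).1, ξ, hξ, fun η h => (hsub h).2⟩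

/-- If `I` is a `<ω₂`-complete proper ideal on `ω₂` carrying a dense `<ω₁`-closed
family `ℬ ⊆ I⁺`, then player II has a winning strategy in `𝔊^α_{ω₁}(I)` for every
countable ordinal `α`. -/
theorem statement8 (I : Set (Set Ordinal.{0}))
    (hsub : ∀ X ∈ I, X ⊆ Set.Iio omega2)
    (hempty : (∅ : Set Ordinal.{0}) ∈ I)
    (hdown : ∀ X ∈ I, ∀ Y : Set Ordinal.{0}, Y ⊆ X → Y ∈ I)
    (hunion : ∀ X ∈ I, ∀ Y ∈ I, X ∪ Y ∈ I)
    (hproper : Set.Iio omega2 ∉ I)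
    (hcomplete : ∀ C : Set (Set Ordinal.{0}), C ⊆ I →
      Cardinal.mk ↥C < Cardinal.lift.{1,0} (Cardinal.aleph 2) → ⋃₀ C ∈ I)
    (ℬ : Set (Set Ordinal.{0}))
    (hBpos : ∀ B ∈ ℬ, B ⊆ Set.Iio omega2 ∧ B ∉ I)
    (hdense : ∀ X : Set Ordinal.{0}, X ⊆ Set.Iio omega2 → X ∉ I → ∃ B ∈ ℬ, B ⊆ X)
    (hclosed : ∀ g : ℕ → Set Ordinal.{0}, (∀ n, g n ∈ ℬ) →
      (∀ n m : ℕ, n ≤ m → g m ⊆ g n) → ∃ B ∈ ℬ, ∀ n, B ⊆ g n)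
    (α : Ordinal.{0}) (hα : α < omega1) :
    IIWinsOmega1Game I α := by
  refine ⟨fun F β => (response ℬ F β).2, fun F F' β _ h => ?_, fun F hF => ?_⟩
  · simp only [response_congr ℬ F F' β h]
  have hgood : ∀ β < α, GoodResponse ℬ β (F β) (fun γ _ => response ℬ F γ) (response ℬ F β) := by
    intro β
    induction β using WellFoundedLT.induction with
    | ind β ih =>
      intro hβ
      obtain ⟨B, hB, hBs⟩ := exists_lower_bound I ℬ hproper hdense hclosed β (hβ.trans hα)
        (fun γ => (response ℬ F γ).1) (fun γ hγ => (ih γ hγ (hγ.trans hβ)).1)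
        (fun γ hγ => (ih γ hγ (hγ.trans hβ)).2.1)
      obtain ⟨B', hB', hsub, ξ, hξ, hle⟩ :=
        exists_bounded_subset I ℬ hcomplete hBpos hdense B hB (F β) (hF β hβ)
      rw [response]
      exact Classical.epsilon_spec
        (p := GoodResponse ℬ β (F β) fun γ _ => response ℬ F γ)
        ⟨(B', ξ), hB', fun γ hγ => hsub.trans (hBs γ hγ), hξ, hle⟩
  refine ⟨fun β hβ => (hgood β hβ).2.2.1, fun hI => ?_⟩
  obtain ⟨B, hB, hBs⟩ := exists_lower_bound I ℬ hproper hdense hclosed α hα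
    (fun γ => (response ℬ F γ).1) (fun γ hγ => (hgood γ hγ).1) (fun γ hγ => (hgood γ hγ).2.1)
  exact (hBpos B hB).2 (hdown _ hI B fun η hη =>
    ⟨(hBpos B hB).1 hη, fun β hβ => (hgood β hβ).2.2.2 η (hBs β hβ hη)⟩)
end

section
/- Suppose that for every collection 𝒳 of regressive functions on ω₂ with |𝒳| = ℵ₂, player II has a winning strategy in the game 𝔊^{ω+ω}(I_bdd^{cof(ω₁)}, 𝒳). Then for every pair S₀, S₁ of stationary subsets of E^{ω₂}_ω, there exists an ordinal γ < ω₂ of cofinality ω₁ such that S₀ ∩ γ and S₁ ∩ γ are both stationary in γ. -/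
/-!
Suppose that no `η < ω₂` of cofinality `ω₁` reflects both `S₀` and `S₁`. Choose for each such `η`
a club `c η ⊆ η` which misses `S₀` or misses `S₁`. For `ξ < ω₂` let `f ξ` be a regressive function
for which `f ξ η` is a point of `c η` above `ξ` (`exists_family`), and let `σ` be a winning
strategy for player II in the game of length `ω + ω` for this family.

The ordinals closed under the replies of `σ` to finite sequences of indices form a club in `ω₂`
(`clubIn_closed`), so some `δ₀ ∈ S₀` is closed. Let player I play `f (a n)` in the first `ω` rounds,
with `a n` cofinal in `δ₀`; all replies are below `δ₀` (`exists_block`). With these rounds fixed,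
the same argument provides `δ₁ ∈ S₁` and moves for the last `ω` rounds.

Since player II wins, there is `η > δ₀, δ₁` of cofinality `ω₁` for which every value of player I's
functions at `η` is below the corresponding reply. Hence `c η` has points between `a n` and `δ₀`
for all `n`, so `δ₀ ∈ c η` because `c η` is closed (`mem_club_of_cofinal`); likewise `δ₁ ∈ c η`.
But `c η` misses `S₀` or `S₁`.
-/

open Cardinal Ordinal Set

/-- `f` is regressive on `ω₂`: `f η < η` for all `0 < η < ω₂`. -/
def RegressiveOn (f : Ordinal.{0} → Ordinal.{0}) : Prop :=
  ∀ η : Ordinal.{0}, 0 < η → η < omega2 → f η < η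

/-- The ideal `I_bdd^{cof(ω₁)}` of all `A ⊆ ω₂` whose set of elements of
cofinality `ω₁` is bounded below `ω₂`. -/
def Ibdd : Set (Set Ordinal.{0}) :=
  {A | A ⊆ Set.Iio omega2 ∧
       ∃ b < omega2, ∀ γ ∈ A, γ.cof = Cardinal.aleph 1 → γ ≤ b}

/-- Player II has a winning strategy in the game `𝔊^α(I_bdd^{cof(ω₁)}, 𝒳)`: in round
`β < α` player I plays `F β ∈ 𝒳` and player II (following a strategy `σ` which
depends only on the moves played so far) responds with an ordinal `σ F β < ω₂`;
II wins if `{η < ω₂ : ∀ β < α, F β η < σ F β}` is `I_bdd`-positive. -/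
def IIWinsGameX (𝒳 : Set (Ordinal.{0} → Ordinal.{0})) (α : Ordinal.{0}) : Prop :=
  ∃ σ : (Ordinal.{0} → Ordinal.{0} → Ordinal.{0}) → Ordinal.{0} → Ordinal.{0},
    (∀ F F' : Ordinal.{0} → Ordinal.{0} → Ordinal.{0}, ∀ β < α,
      (∀ γ ≤ β, F γ = F' γ) → σ F β = σ F' β) ∧
    (∀ F : Ordinal.{0} → Ordinal.{0} → Ordinal.{0},
      (∀ β < α, F β ∈ 𝒳) →
      (∀ β < α, σ F β < omega2) ∧
      {η | η < omega2 ∧ ∀ β < α, F β η < σ F β} ∉ Ibdd)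

/-- `C` is club in `lam`: unbounded in `lam` and closed. -/
def ClubIn (C : Set Ordinal.{0}) (lam : Ordinal.{0}) : Prop :=
  C ⊆ Set.Iio lam ∧
  (∀ a < lam, ∃ b ∈ C, a < b) ∧
  (∀ S : Set Ordinal.{0}, S ⊆ C → S.Nonempty → sSup S < lam → sSup S ∈ C)

/-- `S` is stationary in `lam`: it meets every club subset of `lam`. -/
def StatIn (S : Set Ordinal.{0}) (lam : Ordinal.{0}) : Prop :=
  ∀ C : Set Ordinal.{0}, ClubIn C lam → (S ∩ C).Nonempty

/-! ### Ordinals closed under a finitary operation -/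

lemma cof_omega2 : omega2.cof = Cardinal.aleph 2 := by
  have h := (Cardinal.isRegular_aleph_add_one 1).cof_ord
  rwa [one_add_one_eq_two] at h

lemma isSuccLimit_omega2 : Order.IsSuccLimit omega2 := by
  rw [← Ordinal.one_lt_cof_iff, cof_omega2]
  exact Cardinal.one_lt_aleph0.trans_le (Cardinal.aleph0_le_aleph 2)

/-- Below `ω₂`, the values of a finitary operation on lists from `x` are bounded, because there
are at most `ℵ₁` such lists. -/
lemma exists_bound (g : List Ordinal.{0} → Ordinal.{0})
    (hg : ∀ l, (∀ a ∈ l, a < omega2) → g l < omega2) (x : Ordinal.{0}) (hx : x < omega2) :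
    ∃ y < omega2, x < y ∧ ∀ l, (∀ a ∈ l, a < x) → g l < y := by
  let G : List x.ToType → Ordinal.{0} := fun l => g (l.map fun t => (ToType.toOrd t).1)
  have hG : ∀ l, G l < omega2 := by
    intro l
    apply hg
    intro a ha
    obtain ⟨t, -, rfl⟩ := List.mem_map.1 ha
    exact (show (ToType.toOrd t).1 < x from (ToType.toOrd t).2).trans hx
  have hcard : Cardinal.mk (List x.ToType) < omega2.cof := by
    refine (Cardinal.mk_list_le_max _).trans_lt ?_
    rw [cof_omega2]
    refine max_lt ?_ ?_
    · rw [← Cardinal.aleph_zero]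
      exact Cardinal.aleph_lt_aleph.2 (by simp)
    · rw [Cardinal.mk_toType]
      exact Cardinal.lt_ord.1 hx
  have hsup : (⨆ l, (G l + 1)) < omega2 := Ordinal.iSup_add_one_lt_of_lt_cof hcard hG
  refine ⟨max (x + 1) (⨆ l, (G l + 1)),
    max_lt (isSuccLimit_omega2.add_one_lt hx) hsup, ?_, ?_⟩
  · exact lt_max_of_lt_left (lt_add_one x)
  · intro l hl
    apply lt_max_of_lt_right
    have hbdd : BddAbove (Set.range fun l => G l + 1) := Ordinal.bddAbove_of_small
    let l' : List x.ToType := l.attach.map fun a => ToType.mk ⟨a.1, hl a.1 a.2⟩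
    have hl' : G l' = g l := by
      simp [G, l', List.map_map, Function.comp_def]
    calc g l < G l' + 1 := by rw [hl']; exact lt_add_one _
      _ ≤ _ := le_ciSup hbdd l'

lemma exists_forall_mem_lt {S : Set Ordinal.{0}} (hne : S.Nonempty) (l : List Ordinal.{0})
    (hl : ∀ a ∈ l, ∃ s ∈ S, a < s) : ∃ s ∈ S, ∀ a ∈ l, a < s := by
  induction l with
  | nil => exact ⟨hne.some, hne.some_mem, by simp⟩
  | cons b l ih =>
    obtain ⟨s, hs, h⟩ := ih fun a ha => hl a (List.mem_cons_of_mem _ ha)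
    obtain ⟨t, ht, hbt⟩ := hl b List.mem_cons_self
    rcases le_total s t with hst | hst
    · refine ⟨t, ht, fun a ha => ?_⟩
      rcases List.mem_cons.1 ha with rfl | ha
      exacts [hbt, (h a ha).trans_le hst]
    · refine ⟨s, hs, fun a ha => ?_⟩
      rcases List.mem_cons.1 ha with rfl | ha
      exacts [hbt.trans_le hst, h a ha]

/-- The ordinals below `ω₂` closed under a finitary operation form a club. -/
lemma clubIn_closed (g : List Ordinal.{0} → Ordinal.{0})
    (hg : ∀ l, (∀ a ∈ l, a < omega2) → g l < omega2) :
    ClubIn {δ | δ < omega2 ∧ ∀ l, (∀ a ∈ l, a < δ) → g l < δ} omega2 := by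
  refine ⟨fun δ h => h.1, fun x hx => ?_, fun S hS hne hlt => ⟨hlt, fun l hl => ?_⟩⟩
  · have hb : ∀ x, ∃ y, x < omega2 → y < omega2 ∧ x < y ∧ ∀ l, (∀ a ∈ l, a < x) → g l < y := by
      intro x
      by_cases hx : x < omega2
      · obtain ⟨y, h⟩ := exists_bound g hg x hx
        exact ⟨y, fun _ => h⟩
      · exact ⟨0, fun h => absurd h hx⟩
    choose h hh using hb
    have hit : ∀ n : ℕ, h^[n] x < omega2 := by
      intro n
      induction n with
      | zero => exact hx
      | succ n ih => rw [Function.iterate_succ_apply']; exact (hh _ ih).1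
    have hcof : Cardinal.aleph0 < omega2.cof := by
      rw [cof_omega2, ← Cardinal.aleph_zero]
      exact Cardinal.aleph_lt_aleph.2 (by simp)
    refine ⟨Ordinal.nfp h x, ⟨Ordinal.nfp_lt_ord hcof (fun i hi => (hh i hi).1) hx,
      fun l hl => ?_⟩, ?_⟩
    · obtain ⟨_, ⟨n, rfl⟩, hn⟩ := exists_forall_mem_lt (S := Set.range fun n : ℕ => h^[n] x)
        ⟨_, 0, rfl⟩ l (fun a ha => by
          obtain ⟨n, hn⟩ := Ordinal.lt_nfp_iff.1 (hl a ha)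
          exact ⟨_, ⟨n, rfl⟩, hn⟩)
      refine Ordinal.lt_nfp_iff.2 ⟨n + 1, ?_⟩
      rw [Function.iterate_succ_apply']
      exact (hh _ (hit n)).2.2 l hn
    · exact Ordinal.lt_nfp_iff.2 ⟨1, (hh x hx).2.1⟩
  · have hbdd : BddAbove S := ⟨omega2, fun s hs => (hS hs).1.le⟩
    obtain ⟨s, hs, h⟩ := exists_forall_mem_lt hne l fun a ha => exists_lt_of_lt_csSup hne (hl a ha)
    exact ((hS hs).2 l h).trans_le (le_csSup hbdd hs)

lemma exists_cofinal_seq {δ : Ordinal.{0}} (hδ : δ.cof = Cardinal.aleph0) :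
    ∃ a : ℕ → Ordinal.{0}, (∀ n, a n < δ) ∧ ∀ x < δ, ∃ n, x ≤ a n := by
  obtain ⟨s, hs, hcard⟩ := Order.exists_cof_eq δ.ToType
  rw [Ordinal.cof_toType, hδ] at hcard
  have : Countable s := Cardinal.mk_le_aleph0_iff.1 hcard.le
  have : Nonempty s := Cardinal.mk_ne_zero_iff.1 (hcard ▸ Cardinal.aleph0_ne_zero)
  obtain ⟨e, he⟩ := exists_surjective_nat s
  refine ⟨fun n => (ToType.toOrd (e n).1).1, fun n => (ToType.toOrd (e n).1).2, fun x hx => ?_⟩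
  obtain ⟨t, ht, hxt⟩ := hs (ToType.mk ⟨x, hx⟩)
  obtain ⟨n, hn⟩ := he ⟨t, ht⟩
  refine ⟨n, ?_⟩
  simp only [hn]
  have := ToType.mk.symm.monotone hxt
  rw [OrderIso.symm_apply_apply] at this
  exact this

/-! ### A block of `ω` rounds of the game -/

/-- The run which follows `G` in the rounds before `ρ` and in which player I plays
`f (a n)` in round `ρ + n`. -/
noncomputable def blockRun (f : Ordinal.{0} → Ordinal.{0} → Ordinal.{0})
    (G : Ordinal.{0} → Ordinal.{0} → Ordinal.{0}) (ρ : Ordinal.{0}) (a : ℕ → Ordinal.{0}) :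
    Ordinal.{0} → Ordinal.{0} → Ordinal.{0} :=
  open Classical in
  fun β => if β < ρ then G β else f (a (Cardinal.toNat (β - ρ).card))

lemma blockRun_lt {f G : Ordinal.{0} → Ordinal.{0} → Ordinal.{0}} {ρ : Ordinal.{0}}
    {a : ℕ → Ordinal.{0}} {β : Ordinal.{0}} (h : β < ρ) : blockRun f G ρ a β = G β := by
  simp [blockRun, h]

lemma blockRun_add {f G : Ordinal.{0} → Ordinal.{0} → Ordinal.{0}} {ρ : Ordinal.{0}}
    {a : ℕ → Ordinal.{0}} (n : ℕ) : blockRun f G ρ a (ρ + n) = f (a n) := by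
  simp [blockRun]

/-- In `ω` consecutive rounds, player I can choose indices `a n` cofinal in some `δ ∈ S` to each of
which the strategy `σ` replies below `δ`: it suffices that `δ` is closed under the replies of `σ`
to finite sequences of indices, continuing the fixed history `G`. -/
lemma exists_block (f : Ordinal.{0} → Ordinal.{0} → Ordinal.{0}) (α ρ : Ordinal.{0})
    (hρ : ∀ n : ℕ, ρ + n < α)
    (σ : (Ordinal.{0} → Ordinal.{0} → Ordinal.{0}) → Ordinal.{0} → Ordinal.{0})
    (hloc : ∀ F F' : Ordinal.{0} → Ordinal.{0} → Ordinal.{0}, ∀ β < α,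
      (∀ γ ≤ β, F γ = F' γ) → σ F β = σ F' β)
    (hσ : ∀ F : Ordinal.{0} → Ordinal.{0} → Ordinal.{0},
      (∀ β < α, F β ∈ f '' Set.Iio omega2) → ∀ β < α, σ F β < omega2)
    (G : Ordinal.{0} → Ordinal.{0} → Ordinal.{0}) (hG : ∀ β < α, G β ∈ f '' Set.Iio omega2)
    (S : Set Ordinal.{0}) (hS : ∀ γ ∈ S, γ < omega2 ∧ γ.cof = Cardinal.aleph0)
    (hstat : StatIn S omega2) :
    ∃ δ ∈ S, ∃ F : Ordinal.{0} → Ordinal.{0} → Ordinal.{0},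
      (∀ β < ρ, F β = G β) ∧ (∀ β < α, F β ∈ f '' Set.Iio omega2) ∧
      ∃ a : ℕ → Ordinal.{0}, (∀ n, a n < δ) ∧ (∀ x < δ, ∃ n, x ≤ a n) ∧
        ∀ n : ℕ, F (ρ + n) = f (a n) ∧ σ F (ρ + n) < δ := by
  have hrun : ∀ a : ℕ → Ordinal.{0}, (∀ n, a n < omega2) →
      ∀ β < α, blockRun f G ρ a β ∈ f '' Set.Iio omega2 := by
    intro a ha β hβ
    by_cases h : β < ρ
    · rw [blockRun_lt h]; exact hG β hβ
    · simp only [blockRun, h, if_false]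
      exact ⟨_, ha _, rfl⟩
  -- The list `l` of indices encodes the position after `l.length` rounds of the block; the
  -- reply computed is the one to the last entry of `l`.
  let g : List Ordinal.{0} → Ordinal.{0} := fun l =>
    σ (blockRun f G ρ fun i => l.getD i 0) (ρ + ((l.length - 1 : ℕ) : Ordinal.{0}))
  have hg : ∀ l, (∀ a ∈ l, a < omega2) → g l < omega2 := by
    intro l hl
    refine hσ _ (hrun _ fun n => ?_) _ (hρ _)
    by_cases h : n < l.length
    · rw [List.getD_eq_getElem _ _ h]; exact hl _ (List.getElem_mem h)
    · rw [List.getD_eq_default _ _ (not_lt.1 h)]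
      exact isSuccLimit_omega2.bot_lt
  obtain ⟨δ, hδS, hδ, hcl⟩ := hstat _ (clubIn_closed g hg)
  obtain ⟨a, ha, hcof⟩ := exists_cofinal_seq (hS δ hδS).2
  refine ⟨δ, hδS, blockRun f G ρ a, fun β hβ => blockRun_lt hβ,
    hrun a fun n => (ha n).trans hδ, a, ha, hcof, fun n => ⟨blockRun_add n, ?_⟩⟩
  have h := hcl ((List.range (n + 1)).map a) (by
    intro b hb
    obtain ⟨i, -, rfl⟩ := List.mem_map.1 hb
    exact ha i)
  convert h using 1
  simp only [g, List.length_map, List.length_range, Nat.add_sub_cancel]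
  refine hloc _ _ _ (hρ n) fun γ hγ => ?_
  by_cases hγρ : γ < ρ
  · rw [blockRun_lt hγρ, blockRun_lt hγρ]
  · obtain ⟨m, hm⟩ : ∃ m : ℕ, γ = ρ + m := by
      have h1 : γ - ρ ≤ n := Ordinal.sub_le.2 hγ
      obtain ⟨m, hm⟩ := Ordinal.lt_omega0.1 (h1.trans_lt (Ordinal.natCast_lt_omega0 n))
      exact ⟨m, by rw [← hm, Ordinal.add_sub_cancel_of_le (not_lt.1 hγρ)]⟩
    subst hm
    have hmn : m < n + 1 := by
      have := (add_le_add_iff_left ρ).1 hγ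
      exact Nat.lt_succ_of_le (by exact_mod_cast this)
    rw [blockRun_add, blockRun_add, List.getD_eq_getElem _ _ (by simpa using hmn)]
    simp

/-! ### Functions reading off points of clubs -/

/-- If a club of `η` has a point in `(a n, δ)` for every member `a n` of a sequence cofinal in
`δ < η`, then it contains `δ`. -/
lemma mem_club_of_cofinal {C : Set Ordinal.{0}} {η δ : Ordinal.{0}} (hC : ClubIn C η) (hδ : δ < η)
    {a c : ℕ → Ordinal.{0}} (hcof : ∀ x < δ, ∃ n, x ≤ a n) (hcC : ∀ n, c n ∈ C)
    (hac : ∀ n, a n < c n) (hcδ : ∀ n, c n < δ) : δ ∈ C := by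
  have hsup : sSup (Set.range c) = δ := by
    refine csSup_eq_of_forall_le_of_forall_lt_exists_gt (Set.range_nonempty c) ?_ ?_
    · rintro _ ⟨n, rfl⟩; exact (hcδ n).le
    · intro x hx
      obtain ⟨n, hn⟩ := hcof x hx
      exact ⟨c n, ⟨n, rfl⟩, hn.trans_lt (hac n)⟩
  have h := hC.2.2 (Set.range c) (by rintro _ ⟨n, rfl⟩; exact hcC n) (Set.range_nonempty c)
    (by rwa [hsup])
  rwa [hsup] at h

/-- From a choice of clubs `c η ⊆ η` for `η` of cofinality `ω₁`, a family of `ℵ₂` regressive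
functions `f ξ` such that `f ξ η` is a point of `c η` above `ξ`. -/
lemma exists_family (c : Ordinal.{0} → Set Ordinal.{0})
    (hc : ∀ η < omega2, η.cof = Cardinal.aleph 1 → ClubIn (c η) η) :
    ∃ f : Ordinal.{0} → Ordinal.{0} → Ordinal.{0},
      (∀ h ∈ f '' Set.Iio omega2, RegressiveOn h) ∧
      Cardinal.mk ↥(f '' Set.Iio omega2) = Cardinal.lift.{1, 0} (Cardinal.aleph 2) ∧
      ∀ ξ η, η < omega2 → η.cof = Cardinal.aleph 1 → ξ < η → f ξ η ∈ c η ∧ ξ < f ξ η := by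
  classical
  have hb : ∀ ξ η, ∃ y, η < omega2 → η.cof = Cardinal.aleph 1 → ξ < η → y ∈ c η ∧ ξ < y := by
    intro ξ η
    by_cases h : η < omega2 ∧ η.cof = Cardinal.aleph 1 ∧ ξ < η
    · obtain ⟨y, hy⟩ := (hc η h.1 h.2.1).2.1 ξ h.2.2
      exact ⟨y, fun _ _ _ => hy⟩
    · exact ⟨0, fun h1 h2 h3 => absurd ⟨h1, h2, h3⟩ h⟩
  choose p hp using hb
  -- Functions on `ω₂` are encoded as functions on all ordinals; the value at `ω₂` itself is
  -- immaterial for the game and is used to make the `f ξ` pairwise distinct.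
  let f : Ordinal.{0} → Ordinal.{0} → Ordinal.{0} := fun ξ η =>
    if η = omega2 then ξ else if η.cof = Cardinal.aleph 1 ∧ ξ < η then p ξ η else 0
  refine ⟨f, ?_, ?_, ?_⟩
  · rintro _ ⟨ξ, -, rfl⟩ η hη0 hη
    simp only [f, hη.ne, if_false]
    split_ifs with h
    · exact (hc η hη h.1).1 (hp ξ η hη h.1 h.2).1
    · exact hη0
  · rw [Cardinal.mk_image_eq_of_injOn]
    · simp [omega2]
    · intro x _ y _ hxy
      simpa [f] using congrFun hxy omega2
  · intro ξ η hη hcof hξ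
    have : f ξ η = p ξ η := by simp [f, hη.ne, hcof, hξ]
    rw [this]
    exact hp ξ η hη hcof hξ

/-- If for every `ℵ₂`-sized collection `𝒳` of regressive functions on `ω₂` player II
has a winning strategy in `𝔊^{ω+ω}(I_bdd^{cof(ω₁)}, 𝒳)`, then every two stationary
subsets of `E^{ω₂}_ω` reflect simultaneously at some ordinal of cofinality `ω₁`. -/
theorem statement10
    (H : ∀ 𝒳 : Set (Ordinal.{0} → Ordinal.{0}),
      (∀ f ∈ 𝒳, RegressiveOn f) →
      Cardinal.mk ↥𝒳 = Cardinal.lift.{1,0} (Cardinal.aleph 2) →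
      IIWinsGameX 𝒳 ((Ordinal.omega0 : Ordinal.{0}) + Ordinal.omega0))
    (S₀ S₁ : Set Ordinal.{0})
    (h₀ : ∀ γ ∈ S₀, γ < omega2 ∧ γ.cof = Cardinal.aleph0)
    (h₁ : ∀ γ ∈ S₁, γ < omega2 ∧ γ.cof = Cardinal.aleph0)
    (hs₀ : StatIn S₀ omega2) (hs₁ : StatIn S₁ omega2) :
    ∃ γ < omega2, γ.cof = Cardinal.aleph 1 ∧
      StatIn (S₀ ∩ Set.Iio γ) γ ∧ StatIn (S₁ ∩ Set.Iio γ) γ := by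

  by_contra hno
  have hclub : ∀ η, ∃ C : Set Ordinal.{0}, η < omega2 → η.cof = Cardinal.aleph 1 →
      ClubIn C η ∧ ((∀ δ ∈ S₀, δ < η → δ ∉ C) ∨ ∀ δ ∈ S₁, δ < η → δ ∉ C) := by
    intro η
    by_cases h : η < omega2 ∧ η.cof = Cardinal.aleph 1
    · have key : ∀ S : Set Ordinal.{0}, ¬ StatIn (S ∩ Set.Iio η) η →
          ∃ C, ClubIn C η ∧ ∀ δ ∈ S, δ < η → δ ∉ C := by
        intro S hS
        simp only [StatIn, not_forall] at hS
        obtain ⟨C, hC, hd⟩ := hS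
        exact ⟨C, hC, fun δ h1 h2 h3 => hd ⟨δ, ⟨h1, h2⟩, h3⟩⟩
      by_cases hη : StatIn (S₀ ∩ Set.Iio η) η
      · obtain ⟨C, hC, hd⟩ := key S₁ fun h1 => hno ⟨η, h.1, h.2, hη, h1⟩
        exact ⟨C, fun _ _ => ⟨hC, Or.inr hd⟩⟩
      · obtain ⟨C, hC, hd⟩ := key S₀ hη
        exact ⟨C, fun _ _ => ⟨hC, Or.inl hd⟩⟩
    · exact ⟨∅, fun h1 h2 => absurd ⟨h1, h2⟩ h⟩
  choose c hc using hclub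
  obtain ⟨f, hreg, hcard, hf⟩ := exists_family c fun η h1 h2 => (hc η h1 h2).1
  obtain ⟨σ, hloc, hwin⟩ := H _ hreg hcard
  have hω : ∀ n : ℕ, (n : Ordinal.{0}) < ω := Ordinal.natCast_lt_omega0
  have hρ₀ : ∀ n : ℕ, (0 : Ordinal.{0}) + n < ω + ω := fun n => by
    rw [zero_add]; exact (hω n).trans_le le_self_add
  have hρ₁ : ∀ n : ℕ, (ω : Ordinal.{0}) + n < ω + ω := fun n =>
    (add_lt_add_iff_left _).2 (hω n)
  have hσ := fun F hF => (hwin F hF).1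
  obtain ⟨δ₀, hδ₀, F₀, -, hF₀, a₀, ha₀, hcof₀, hr₀⟩ :=
    exists_block f _ 0 hρ₀ σ hloc hσ (fun _ => f 0)
      (fun _ _ => ⟨0, isSuccLimit_omega2.bot_lt, rfl⟩) S₀ h₀ hs₀
  obtain ⟨δ₁, hδ₁, F₁, hagree, hF₁, a₁, ha₁, hcof₁, hr₁⟩ :=
    exists_block f _ ω hρ₁ σ hloc hσ F₀ hF₀ S₁ h₁ hs₁
  have hr₀' : ∀ n : ℕ, F₁ n = f (a₀ n) ∧ σ F₁ n < δ₀ := by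
    intro n
    have h := hr₀ n
    rw [zero_add] at h
    refine ⟨(hagree _ (hω n)).trans h.1, ?_⟩
    rw [hloc F₁ F₀ n (by simpa using hρ₀ n) fun γ hγ => hagree γ (hγ.trans_lt (hω n))]
    exact h.2
  have hpos := (hwin F₁ hF₁).2
  obtain ⟨η, ⟨hη, hηF⟩, hηcof, hηb⟩ : ∃ η ∈ {η | η < omega2 ∧ ∀ β < ω + ω, F₁ β η < σ F₁ β},
      η.cof = Cardinal.aleph 1 ∧ max δ₀ δ₁ < η := by
    by_contra hcon
    refine hpos ⟨fun η h => h.1, max δ₀ δ₁, max_lt (h₀ _ hδ₀).1 (h₁ _ hδ₁).1, fun γ hγ hγc => ?_⟩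
    by_contra hlt
    exact hcon ⟨γ, hγ, hγc, not_le.1 hlt⟩
  obtain ⟨hη₀, hη₁⟩ := max_lt_iff.1 hηb
  have hC := hc η hη hηcof
  have hmem₀ : δ₀ ∈ c η := by
    refine mem_club_of_cofinal hC.1 hη₀ hcof₀ (c := fun n => f (a₀ n) η)
      (fun n => (hf _ η hη hηcof ((ha₀ n).trans hη₀)).1)
      (fun n => (hf _ η hη hηcof ((ha₀ n).trans hη₀)).2) fun n => ?_
    have h := hηF n (by simpa using hρ₀ n)
    rw [(hr₀' n).1] at h
    exact h.trans (hr₀' n).2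
  have hmem₁ : δ₁ ∈ c η := by
    refine mem_club_of_cofinal hC.1 hη₁ hcof₁ (c := fun n => f (a₁ n) η)
      (fun n => (hf _ η hη hηcof ((ha₁ n).trans hη₁)).1)
      (fun n => (hf _ η hη hηcof ((ha₁ n).trans hη₁)).2) fun n => ?_
    have h := hηF _ (hρ₁ n)
    rw [(hr₁ n).1] at h
    exact h.trans (hr₁ n).2
  rcases hC.2 with h | h
  · exact h δ₀ hδ₀ hη₀ hmem₀
  · exact h δ₁ hδ₁ hη₁ hmem₁
end
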